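/- arXiv:1912.06939 — 5 statements merged into one kernel-verified Lean document; each statement's English description precedes it below -/
import Mathlib

section
/- Let n ≥ 1, let ε₁, …, εₙ ≥ 0, and for each i let Vᵢ : ℝⁿ → ℝ be continuous and nonnegative. Define f : ℝⁿ → ℝⁿ by fᵢ(x) = εᵢxᵢ + Vᵢ(x). If x : [0, ∞) → ℝⁿ is differentiable with x'(t) = f(x(t)) for all t ≥ 0, xᵢ(0) ≥ 0 for every i, and the range of x is bounded, then x(t) converges as t → ∞ to a point p ∈ [0, ∞)ⁿ, and p is an equilibrium of the system, i.e. f(p) = 0. -/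
/-!
Each coordinate obeys `(e^{-εᵢ t} xᵢ)' = e^{-εᵢ t} Vᵢ(x) ≥ 0`, so it stays nonnegative. Hence
`xᵢ' = εᵢ xᵢ + Vᵢ(x) ≥ 0`: every coordinate is monotone, and being bounded it converges
(`exists_tendsto_of_monotoneOn_Ici`). By continuity `x'(t) = f (x t)` then converges to `f p`, and
a convergent function whose derivative converges to a nonnegative limit has derivative limit zero
(`deriv_limit_nonpos_of_tendsto`).
-/

open Set Filter Topology

private theorem hasDerivAt_of_Ici {g g' : ℝ → ℝ}
    (hg : ∀ t ∈ Ici (0 : ℝ), HasDerivWithinAt g (g' t) (Ici 0) t) {t : ℝ} (ht : 0 < t) :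
    HasDerivAt g (g' t) t :=
  (hg t ht.le).hasDerivAt (Ici_mem_nhds ht)

private theorem monotoneOn_Ici_of_hasDerivWithinAt {g g' : ℝ → ℝ}
    (hg : ∀ t ∈ Ici (0 : ℝ), HasDerivWithinAt g (g' t) (Ici 0) t)
    (hpos : ∀ t, 0 < t → 0 ≤ g' t) : MonotoneOn g (Ici 0) := by
  refine monotoneOn_of_deriv_nonneg (convex_Ici 0)
    (fun t ht => (hg t ht).continuousWithinAt) ?_ ?_
  · intro t ht
    rw [interior_Ici] at ht
    exact (hasDerivAt_of_Ici hg ht).differentiableAt.differentiableWithinAt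
  · intro t ht
    rw [interior_Ici] at ht
    rw [(hasDerivAt_of_Ici hg ht).deriv]
    exact hpos t ht

private theorem exists_tendsto_of_monotoneOn_Ici {g : ℝ → ℝ} (hg : MonotoneOn g (Ici 0)) {C : ℝ}
    (hC : ∀ t, 0 ≤ t → g t ≤ C) : ∃ l, Tendsto g atTop (𝓝 l) := by
  have hmono : Monotone fun t => g (max t 0) := fun a b hab =>
    hg (le_max_right a 0) (le_max_right b 0) (max_le_max_right 0 hab)
  have hb : BddAbove (range fun t => g (max t 0)) := by
    refine ⟨C, ?_⟩
    rintro _ ⟨t, rfl⟩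
    exact hC _ (le_max_right t 0)
  refine ⟨_, (tendsto_atTop_ciSup hmono hb).congr' ?_⟩
  filter_upwards [eventually_ge_atTop 0] with t ht
  rw [max_eq_left ht]

/-- If the limit `c` of `g'` were positive, then `g (t + 1) - g t ≥ c / 2` for all large `t`,
whereas these increments tend to `0` when `g` converges. -/
private theorem deriv_limit_nonpos_of_tendsto {g g' : ℝ → ℝ} {l c : ℝ}
    (hg : ∀ t ∈ Ici (0 : ℝ), HasDerivWithinAt g (g' t) (Ici 0) t)
    (hl : Tendsto g atTop (𝓝 l)) (hc : Tendsto g' atTop (𝓝 c)) : c ≤ 0 := by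
  by_contra! hcpos
  have hincr : Tendsto (fun t => g (t + 1) - g t) atTop (𝓝 0) := by
    simpa using (hl.comp (tendsto_atTop_add_const_right atTop (1 : ℝ) tendsto_id)).sub hl
  obtain ⟨T, hT⟩ := eventually_atTop.1 (hc.eventually (lt_mem_nhds (half_lt_self hcpos)))
  have hlow : ∀ᶠ t in atTop, c / 2 ≤ g (t + 1) - g t := by
    filter_upwards [eventually_ge_atTop T, eventually_gt_atTop 0] with t htT ht0
    have hd : ∀ s ∈ Ici t, HasDerivAt g (g' s) s := fun s hs =>
      hasDerivAt_of_Ici hg (ht0.trans_le hs)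
    have := (convex_Ici t).mul_sub_le_image_sub_of_le_deriv
      (fun s hs => (hd s hs).continuousAt.continuousWithinAt)
      (fun s hs => (hd s (interior_subset hs)).differentiableAt.differentiableWithinAt)
      (C := c / 2)
      (fun s hs => by
        rw [(hd s (interior_subset hs)).deriv]
        exact (hT s (htT.trans (interior_subset hs))).le)
      t self_mem_Ici (t + 1) (mem_Ici.2 (by linarith)) (by linarith)
    linarith
  have := ge_of_tendsto hincr hlow
  linarith


/-- For the system xᵢ' = εᵢxᵢ + Vᵢ(x) with εᵢ ≥ 0 and Vᵢ continuous and nonnegative,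
every bounded solution on [0, ∞) starting in the nonnegative orthant converges, as
t → ∞, to an equilibrium p ∈ [0, ∞)ⁿ of the system. -/
theorem bounded_solution_tendsto_equilibrium
    (n : ℕ) (hn : 1 ≤ n) (ε : Fin n → ℝ) (hε : ∀ i, 0 ≤ ε i)
    (V : Fin n → (Fin n → ℝ) → ℝ)
    (hVcont : ∀ i, Continuous (V i)) (hVpos : ∀ i x, 0 ≤ V i x)
    (f : (Fin n → ℝ) → (Fin n → ℝ)) (hf : ∀ x i, f x i = ε i * x i + V i x)
    (x : ℝ → (Fin n → ℝ))
    (hsol : ∀ t ∈ Set.Ici (0 : ℝ), HasDerivWithinAt x (f (x t)) (Set.Ici 0) t)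
    (hinit : ∀ i, 0 ≤ x 0 i)
    (hbdd : Bornology.IsBounded (x '' Set.Ici (0 : ℝ))) :
    ∃ p : Fin n → ℝ, (∀ i, 0 ≤ p i) ∧
      Filter.Tendsto x Filter.atTop (nhds p) ∧ f p = 0 := by
  have hcoord : ∀ i, ∀ t ∈ Ici (0 : ℝ),
      HasDerivWithinAt (fun s => x s i) (f (x t) i) (Ici 0) t := fun i t ht =>
    hasDerivWithinAt_pi.1 (hsol t ht) i
  have hnonneg : ∀ i t, 0 ≤ t → 0 ≤ x t i := by
    intro i t ht
    -- The integrating factor removes the linear term, so no sign of `x t i` is needed here.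
    have hd : ∀ s ∈ Ici (0 : ℝ), HasDerivWithinAt (fun s => Real.exp (-ε i * s) * x s i)
        (Real.exp (-ε i * s) * V i (x s)) (Ici 0) s := by
      intro s hs
      have he : HasDerivAt (fun s => Real.exp (-ε i * s)) (Real.exp (-ε i * s) * (-ε i)) s := by
        simpa using ((hasDerivAt_id s).const_mul (-ε i)).exp
      refine (he.hasDerivWithinAt.mul (hcoord i s hs)).congr_deriv ?_
      rw [hf]
      ring
    have hm := monotoneOn_Ici_of_hasDerivWithinAt hd
      (fun s _ => mul_nonneg (Real.exp_pos _).le (hVpos i _)) self_mem_Ici (mem_Ici.2 ht) ht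
    simp only [mul_zero, Real.exp_zero, one_mul] at hm
    exact nonneg_of_mul_nonneg_right ((hinit i).trans hm) (Real.exp_pos _)
  have hmono : ∀ i, MonotoneOn (fun t => x t i) (Ici 0) := fun i =>
    monotoneOn_Ici_of_hasDerivWithinAt (hcoord i) fun t ht => by
      rw [hf]
      exact add_nonneg (mul_nonneg (hε i) (hnonneg i t ht.le)) (hVpos i _)
  obtain ⟨C, hC⟩ := hbdd.exists_norm_le
  have hlim : ∀ i, ∃ l, Tendsto (fun t => x t i) atTop (𝓝 l) := fun i =>
    exists_tendsto_of_monotoneOn_Ici (hmono i) fun t ht =>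
      ((le_abs_self _).trans (norm_le_pi_norm (x t) i)).trans (hC _ (mem_image_of_mem x ht))
  choose p hp using hlim
  have hxp : Tendsto x atTop (𝓝 p) := tendsto_pi_nhds.2 hp
  have hp0 : ∀ i, 0 ≤ p i := fun i =>
    ge_of_tendsto (hp i) ((eventually_ge_atTop 0).mono fun t ht => hnonneg i t ht)
  refine ⟨p, hp0, hxp, ?_⟩
  funext i
  have hfp : Tendsto (fun t => f (x t) i) atTop (𝓝 (f p i)) := by
    simp only [hf]
    exact ((hp i).const_mul (ε i)).add (((hVcont i).tendsto p).comp hxp)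
  refine le_antisymm (deriv_limit_nonpos_of_tendsto (hcoord i) (hp i) hfp) ?_
  rw [hf]
  exact add_nonneg (mul_nonneg (hε i) (hp0 i)) (hVpos i p)
end

section
/- Let n ≥ 1, let ε₁, …, εₙ ≥ 0, and for each i let Vᵢ : ℝⁿ → ℝ be continuous and nonnegative. Define f : ℝⁿ → ℝⁿ by fᵢ(x) = εᵢxᵢ + Vᵢ(x). Then for every differentiable x : [0, ∞) → ℝⁿ with x'(t) = f(x(t)) for all t ≥ 0 and x(0) ∈ [0, ∞)ⁿ, exactly one of the following holds: (i) x(t) converges as t → ∞ to a point p ∈ [0, ∞)ⁿ with f(p) = 0, or (ii) the range of x is unbounded. -/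
/-!
Each coordinate of the solution satisfies `xᵢ' ≥ εᵢ xᵢ`, so `exp (-εᵢ t) * xᵢ t` is nondecreasing and
`xᵢ` stays nonnegative (`nonneg_of_growth`). Hence `xᵢ' = εᵢ xᵢ + Vᵢ(x) ≥ 0` and every coordinate is
itself nondecreasing on `[0, ∞)`.

If the orbit is bounded, monotone convergence in each coordinate gives a limit `p`. By continuity
`fᵢ(x t) → fᵢ(p) ≥ 0`, and a positive value of `fᵢ(p)` would force at least linear growth of `xᵢ`
(`deriv_limit_nonpos`), so `f p = 0`. Conversely, a convergent orbit lies in the box `[0, p]` by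
monotonicity, so the two alternatives exclude each other.
-/

lemma monotoneOn_Ici_of_deriv {y y' : ℝ → ℝ} {T : ℝ} (hT : 0 ≤ T)
    (hy : ∀ t ∈ Set.Ici (0 : ℝ), HasDerivWithinAt y (y' t) (Set.Ici 0) t)
    (hpos : ∀ t ∈ Set.Ici T, 0 ≤ y' t) : MonotoneOn y (Set.Ici T) := by
  have hsub : Set.Ici T ⊆ Set.Ici (0 : ℝ) := Set.Ici_subset_Ici.2 hT
  refine monotoneOn_of_hasDerivWithinAt_nonneg (f' := y') (convex_Ici T) ?_ ?_ ?_
  · exact fun t ht => ((hy t (hsub ht)).mono hsub).continuousWithinAt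
  · exact fun t ht => (hy t (hsub (interior_subset ht))).mono (interior_subset.trans hsub)
  · exact fun t ht => hpos t (interior_subset ht)

/-- A function with `y' ≥ e * y` and `0 ≤ y 0` stays nonnegative, since `exp (-e t) * y t` is
nondecreasing. -/
lemma nonneg_of_growth {y y' : ℝ → ℝ} {e : ℝ}
    (hy : ∀ t ∈ Set.Ici (0 : ℝ), HasDerivWithinAt y (y' t) (Set.Ici 0) t)
    (hgrow : ∀ t ∈ Set.Ici (0 : ℝ), e * y t ≤ y' t) (h0 : 0 ≤ y 0) :
    ∀ t ∈ Set.Ici (0 : ℝ), 0 ≤ y t := by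
  have hexp : ∀ t : ℝ, HasDerivAt (fun s => Real.exp (-e * s)) (Real.exp (-e * t) * -e) t := by
    intro t
    simpa using ((hasDerivAt_id t).const_mul (-e)).exp
  have hmono : MonotoneOn (fun s => Real.exp (-e * s) * y s) (Set.Ici 0) := by
    refine monotoneOn_Ici_of_deriv le_rfl
      (fun t ht => (hexp t).hasDerivWithinAt.mul (hy t ht)) ?_
    intro t ht
    have h := mul_nonneg (Real.exp_pos (-e * t)).le (sub_nonneg.2 (hgrow t ht))
    linarith
  intro t ht
  have h := hmono Set.self_mem_Ici ht ht
  simp only [mul_zero, Real.exp_zero, one_mul] at h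
  exact nonneg_of_mul_nonneg_right (h0.trans h) (Real.exp_pos _)

/-- A convergent function whose derivative has a limit cannot have a positive limiting slope. -/
lemma deriv_limit_nonpos {y y' : ℝ → ℝ} {p q : ℝ}
    (hy : ∀ t ∈ Set.Ici (0 : ℝ), HasDerivWithinAt y (y' t) (Set.Ici 0) t)
    (hp : Filter.Tendsto y Filter.atTop (nhds p))
    (hq : Filter.Tendsto y' Filter.atTop (nhds q)) : q ≤ 0 := by
  by_contra! hpos
  obtain ⟨T, hT⟩ := Filter.eventually_atTop.1 (hq.eventually_const_lt (half_lt_self hpos))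
  have hmono : MonotoneOn (fun s => y s - q / 2 * s) (Set.Ici (max T 0)) := by
    refine monotoneOn_Ici_of_deriv (y' := fun s => y' s - q / 2 * 1) (le_max_right _ _)
      (fun t ht => (hy t ht).sub ((hasDerivWithinAt_id t _).const_mul (q / 2))) ?_
    intro t ht
    have h := hT t ((le_max_left _ _).trans ht)
    linarith
  have hlin : Filter.Tendsto (fun s : ℝ => (y (max T 0) - q / 2 * max T 0) + q / 2 * s)
      Filter.atTop Filter.atTop :=
    Filter.tendsto_atTop_add_const_left _ _ (Filter.tendsto_id.const_mul_atTop (half_pos hpos))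
  refine not_tendsto_nhds_of_tendsto_atTop (Filter.tendsto_atTop_mono' _ ?_ hlin) p hp
  filter_upwards [Filter.eventually_ge_atTop (max T 0)] with s hs
  have h := hmono Set.self_mem_Ici hs hs
  simp only at h
  linarith

lemma exists_tendsto_of_monotoneOn_Ici_s6 {y : ℝ → ℝ} (hmono : MonotoneOn y (Set.Ici 0))
    (hbdd : BddAbove (y '' Set.Ici 0)) : ∃ p, Filter.Tendsto y Filter.atTop (nhds p) := by
  -- Freezing `y` on the negative half-line gives a globally monotone function.
  have hm : Monotone fun t => y (max t 0) := fun s t hst =>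
    hmono (Set.mem_Ici.2 (le_max_right _ _)) (Set.mem_Ici.2 (le_max_right _ _))
      (max_le_max_right 0 hst)
  have hb : BddAbove (Set.range fun t => y (max t 0)) := by
    refine hbdd.mono ?_
    rintro _ ⟨t, rfl⟩
    exact ⟨max t 0, Set.mem_Ici.2 (le_max_right _ _), rfl⟩
  refine ⟨_, (tendsto_atTop_ciSup hm hb).congr' ?_⟩
  filter_upwards [Filter.eventually_ge_atTop 0] with t ht
  rw [max_eq_left ht]

/-- Trending-flow dichotomy: for the system xᵢ' = εᵢxᵢ + Vᵢ(x) with εᵢ ≥ 0 and Vᵢ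
continuous and nonnegative, every solution on [0, ∞) starting in the nonnegative
orthant either (i) converges as t → ∞ to an equilibrium p ∈ [0, ∞)ⁿ, or (ii) has
unbounded range — and exactly one of these holds. -/
theorem trending_flow_dichotomy
    (n : ℕ) (hn : 1 ≤ n) (ε : Fin n → ℝ) (hε : ∀ i, 0 ≤ ε i)
    (V : Fin n → (Fin n → ℝ) → ℝ)
    (hVcont : ∀ i, Continuous (V i)) (hVpos : ∀ i x, 0 ≤ V i x)
    (f : (Fin n → ℝ) → (Fin n → ℝ)) (hf : ∀ x i, f x i = ε i * x i + V i x)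
    (x : ℝ → (Fin n → ℝ))
    (hsol : ∀ t ∈ Set.Ici (0 : ℝ), HasDerivWithinAt x (f (x t)) (Set.Ici 0) t)
    (hinit : ∀ i, 0 ≤ x 0 i) :
    Xor'
      (∃ p : Fin n → ℝ, (∀ i, 0 ≤ p i) ∧
        Filter.Tendsto x Filter.atTop (nhds p) ∧ f p = 0)
      (¬ Bornology.IsBounded (x '' Set.Ici (0 : ℝ))) := by
  have hcoord : ∀ i, ∀ t ∈ Set.Ici (0 : ℝ),
      HasDerivWithinAt (fun s => x s i) (f (x t) i) (Set.Ici 0) t :=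
    fun i t ht => hasDerivWithinAt_pi.1 (hsol t ht) i
  have hnonneg : ∀ i, ∀ t ∈ Set.Ici (0 : ℝ), 0 ≤ x t i := fun i =>
    nonneg_of_growth (e := ε i) (hcoord i)
      (fun t _ => by rw [hf]; linarith [hVpos i (x t)]) (hinit i)
  have hfnonneg : ∀ i, ∀ t ∈ Set.Ici (0 : ℝ), 0 ≤ f (x t) i := fun i t ht => by
    rw [hf]
    exact add_nonneg (mul_nonneg (hε i) (hnonneg i t ht)) (hVpos i _)
  have hmono : ∀ i, MonotoneOn (fun s => x s i) (Set.Ici 0) := fun i =>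
    monotoneOn_Ici_of_deriv le_rfl (hcoord i) (hfnonneg i)
  refine xor_iff_iff_not.2 (Iff.trans ?_ not_not.symm)
  constructor
  · rintro ⟨p, -, hp, -⟩
    refine (Metric.isBounded_Icc (0 : Fin n → ℝ) p).subset ?_
    rintro _ ⟨t, ht, rfl⟩
    refine ⟨fun i => hnonneg i t ht, fun i => ?_⟩
    refine ge_of_tendsto (tendsto_pi_nhds.1 hp i) ?_
    filter_upwards [Filter.eventually_ge_atTop t] with s hs
    exact hmono i ht (le_trans ht hs) hs
  · intro hb
    have hlim : ∀ i, ∃ p, Filter.Tendsto (fun s => x s i) Filter.atTop (nhds p) := by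
      intro i
      refine exists_tendsto_of_monotoneOn_Ici_s6 (hmono i) ?_
      obtain ⟨b, hbd⟩ := hb.bddAbove
      refine ⟨b i, ?_⟩
      rintro _ ⟨t, ht, rfl⟩
      exact hbd ⟨t, ht, rfl⟩ i
    choose p hp using hlim
    have hxp : Filter.Tendsto x Filter.atTop (nhds p) := tendsto_pi_nhds.2 hp
    have hp0 : ∀ i, 0 ≤ p i := fun i => by
      refine ge_of_tendsto (hp i) ?_
      filter_upwards [Filter.eventually_ge_atTop 0] with t ht
      exact hnonneg i t ht
    refine ⟨p, hp0, hxp, funext fun i => le_antisymm ?_ ?_⟩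
    · have hfi : Continuous fun z => f z i := by
        simp only [hf]
        exact (continuous_const.mul (continuous_apply i)).add (hVcont i)
      exact deriv_limit_nonpos (hcoord i) (hp i) ((hfi.tendsto p).comp hxp)
    · rw [hf]
      exact add_nonneg (mul_nonneg (hε i) (hp0 i)) (hVpos i p)
end

section
/- Let f = (f₁, f₂) : ℝ² → ℝ² be continuously differentiable and cooperative, i.e. ∂f₁/∂x₂ ≥ 0 and ∂f₂/∂x₁ ≥ 0 at every point of ℝ². Then every differentiable solution x : [0, ∞) → ℝ² of x'(t) = f(x(t)) whose range is bounded converges as t → ∞ to an equilibrium of f, i.e. to a point p with f(p) = 0. -/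
/-!
Along a solution `x`, the velocity `y = f ∘ x` solves the linear equation `y' = Df(x(t)) y`, whose
off-diagonal coefficients are nonnegative and whose coefficients are bounded because the range of
`x` is. Such an equation leaves the closed first quadrant, and by symmetry the closed third
quadrant, forward invariant (`quadrant_invariant`). Hence either `y` enters one of these quadrants
and stays there, or it avoids both forever and then neither coordinate ever vanishes. In every case
each coordinate of `y` eventually has a constant sign (`eventually_signed`), so each coordinate of
`x` is eventually monotone. Being bounded it converges, and the limit of the velocity must be zero
(`deriv_limit_eq_zero`).
-/

open Set Filter Topology

lemma hasDerivAt_min_zero_sq (r : ℝ) :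
    HasDerivAt (fun r : ℝ => (min r 0) ^ 2) (2 * min r 0) r := by
  rcases lt_trichotomy r 0 with h | h | h
  · have h1 : HasDerivAt (fun r : ℝ => r ^ 2) (2 * r) r := by
      simpa using hasDerivAt_pow 2 r
    rw [min_eq_left h.le]
    refine h1.congr_of_eventuallyEq ?_
    filter_upwards [Iio_mem_nhds h] with z hz
    rw [min_eq_left (le_of_lt hz)]
  · subst h
    -- At the corner, the function is squeezed between `0` and `r ^ 2`.
    rw [hasDerivAt_iff_isLittleO]
    have h1 : (fun r : ℝ => r ^ 2) =o[𝓝 0] fun r : ℝ => r := by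
      simpa using Asymptotics.isLittleO_pow_pow (𝕜 := ℝ) (m := 1) (n := 2) one_lt_two
    refine (Asymptotics.IsBigO.of_bound 1 ?_).trans_isLittleO (by simpa using h1)
    filter_upwards with z
    rcases le_total z 0 with hz | hz <;> simp [hz]
  · rw [min_eq_right h.le]
    simp only [mul_zero]
    refine (hasDerivAt_const r (0 : ℝ)).congr_of_eventuallyEq ?_
    filter_upwards [Ioi_mem_nhds h] with z hz
    rw [min_eq_right (le_of_lt hz)]
    simp

/-- Grönwall's inequality applied to the squared distance
`V = min(u, 0)² + min(v, 0)²` to the quadrant, which satisfies `V' ≤ 4 K V`. -/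
lemma quadrant_invariant {u v a b c d : ℝ → ℝ} {s K : ℝ}
    (hu : ∀ t, s ≤ t → HasDerivAt u (a t * u t + b t * v t) t)
    (hv : ∀ t, s ≤ t → HasDerivAt v (c t * u t + d t * v t) t)
    (hb : ∀ t, s ≤ t → 0 ≤ b t) (hc : ∀ t, s ≤ t → 0 ≤ c t)
    (haK : ∀ t, s ≤ t → a t ≤ K) (hbK : ∀ t, s ≤ t → b t ≤ K)
    (hcK : ∀ t, s ≤ t → c t ≤ K) (hdK : ∀ t, s ≤ t → d t ≤ K)
    (hus : 0 ≤ u s) (hvs : 0 ≤ v s) :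
    ∀ t, s ≤ t → 0 ≤ u t ∧ 0 ≤ v t := by
  set V : ℝ → ℝ := fun t => (min (u t) 0) ^ 2 + (min (v t) 0) ^ 2 with hV
  have hVd : ∀ t, s ≤ t → HasDerivAt V (2 * min (u t) 0 * (a t * u t + b t * v t)
      + 2 * min (v t) 0 * (c t * u t + d t * v t)) t := fun t ht =>
    ((hasDerivAt_min_zero_sq (u t)).comp t (hu t ht)).add
      ((hasDerivAt_min_zero_sq (v t)).comp t (hv t ht))
  have hVle : ∀ t, s ≤ t → 2 * min (u t) 0 * (a t * u t + b t * v t)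
      + 2 * min (v t) 0 * (c t * u t + d t * v t) ≤ 4 * K * V t := by
    intro t ht
    have hm : ∀ r : ℝ, min r 0 * r = (min r 0) ^ 2 := by
      intro r
      rcases le_total r 0 with h | h <;> simp [h, sq]
    have e1 := hm (u t)
    have e2 := hm (v t)
    have m1 : min (u t) 0 ≤ 0 := min_le_right _ _
    have m2 : min (v t) 0 ≤ 0 := min_le_right _ _
    have l1 : min (u t) 0 ≤ u t := min_le_left _ _
    have l2 : min (v t) 0 ≤ v t := min_le_left _ _
    simp only [hV]
    generalize min (u t) 0 = m at *
    generalize min (v t) 0 = n at *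
    have i1 : b t * (m * v t) ≤ b t * (m * n) :=
      mul_le_mul_of_nonneg_left (mul_le_mul_of_nonpos_left l2 m1) (hb t ht)
    have i2 : c t * (n * u t) ≤ c t * (n * m) :=
      mul_le_mul_of_nonneg_left (mul_le_mul_of_nonpos_left l1 m2) (hc t ht)
    have hmn : 0 ≤ m * n := mul_nonneg_of_nonpos_of_nonpos m1 m2
    have i3 : b t * (m * n) ≤ K * (m * n) := mul_le_mul_of_nonneg_right (hbK t ht) hmn
    have i4 : c t * (m * n) ≤ K * (m * n) := mul_le_mul_of_nonneg_right (hcK t ht) hmn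
    have i5 : a t * m ^ 2 ≤ K * m ^ 2 := mul_le_mul_of_nonneg_right (haK t ht) (sq_nonneg m)
    have i6 : d t * n ^ 2 ≤ K * n ^ 2 := mul_le_mul_of_nonneg_right (hdK t ht) (sq_nonneg n)
    have hK : 0 ≤ K := (hb t ht).trans (hbK t ht)
    have i7 : 0 ≤ K * (m - n) ^ 2 := mul_nonneg hK (sq_nonneg _)
    calc 2 * m * (a t * u t + b t * v t) + 2 * n * (c t * u t + d t * v t)
        = 2 * (a t * (m * u t) + b t * (m * v t) + c t * (n * u t) + d t * (n * v t)) := by ring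
      _ ≤ 4 * K * (m ^ 2 + n ^ 2) := by rw [e1, e2]; nlinarith
  have hE : ∀ t, HasDerivAt (fun t => Real.exp (-(4 * K) * t))
      (Real.exp (-(4 * K) * t) * (-(4 * K))) t := fun t => by
    simpa using ((hasDerivAt_id t).const_mul (-(4 * K))).exp
  have hanti : AntitoneOn (fun t => Real.exp (-(4 * K) * t) * V t) (Ici s) := by
    refine antitoneOn_of_hasDerivWithinAt_nonpos (convex_Ici s)
      (fun t ht => ((hE t).mul (hVd t ht)).continuousAt.continuousWithinAt)
      (fun t ht => ((hE t).mul (hVd t (interior_subset ht))).hasDerivWithinAt) ?_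
    intro t ht
    have h1 := mul_le_mul_of_nonneg_left (hVle t (interior_subset ht))
      (Real.exp_pos (-(4 * K) * t)).le
    linarith
  intro t ht
  have h1 := hanti (mem_Ici.2 le_rfl) (mem_Ici.2 ht) ht
  have hVs : V s = 0 := by simp [hV, hus, hvs]
  simp only [hVs, mul_zero] at h1
  have h2 : V t ≤ 0 := by
    by_contra h
    have := mul_pos (Real.exp_pos (-(4 * K) * t)) (not_le.1 h)
    linarith
  have h3 : (min (u t) 0) ^ 2 = 0 := by
    have := sq_nonneg (min (u t) 0); have := sq_nonneg (min (v t) 0)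
    simp only [hV] at h2; linarith
  have h4 : (min (v t) 0) ^ 2 = 0 := by
    have := sq_nonneg (min (u t) 0); have := sq_nonneg (min (v t) 0)
    simp only [hV] at h2; linarith
  exact ⟨min_eq_right_iff.1 (pow_eq_zero_iff two_ne_zero |>.1 h3),
    min_eq_right_iff.1 (pow_eq_zero_iff two_ne_zero |>.1 h4)⟩

lemma signed_of_ne_zero {u : ℝ → ℝ} {s : ℝ} (hu : ContinuousOn u (Ici s))
    (h0 : ∀ t, s ≤ t → u t ≠ 0) :
    (∀ t, s ≤ t → 0 ≤ u t) ∨ (∀ t, s ≤ t → u t ≤ 0) := by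
  by_contra! h
  obtain ⟨⟨p, hp, hup⟩, q, hq, huq⟩ := h
  obtain ⟨r, hr, hr0⟩ := isPreconnected_Ici.intermediate_value (mem_Ici.2 hp) (mem_Ici.2 hq) hu
    ⟨hup.le, huq.le⟩
  exact h0 r hr hr0

/-- Solutions of a planar linear equation with bounded coefficients and nonnegative off-diagonal
ones eventually stay in one closed quadrant. -/
lemma eventually_signed {u v a b c d : ℝ → ℝ} {s K : ℝ}
    (hu : ∀ t, s ≤ t → HasDerivAt u (a t * u t + b t * v t) t)
    (hv : ∀ t, s ≤ t → HasDerivAt v (c t * u t + d t * v t) t)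
    (hb : ∀ t, s ≤ t → 0 ≤ b t) (hc : ∀ t, s ≤ t → 0 ≤ c t)
    (haK : ∀ t, s ≤ t → a t ≤ K) (hbK : ∀ t, s ≤ t → b t ≤ K)
    (hcK : ∀ t, s ≤ t → c t ≤ K) (hdK : ∀ t, s ≤ t → d t ≤ K) :
    ∃ r, s ≤ r ∧ ((∀ t, r ≤ t → 0 ≤ u t) ∨ (∀ t, r ≤ t → u t ≤ 0)) ∧
      ((∀ t, r ≤ t → 0 ≤ v t) ∨ (∀ t, r ≤ t → v t ≤ 0)) := by
  by_cases h1 : ∃ r, s ≤ r ∧ 0 ≤ u r ∧ 0 ≤ v r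
  · obtain ⟨r, hr, hur, hvr⟩ := h1
    have := quadrant_invariant (s := r) (fun t ht => hu t (hr.trans ht))
      (fun t ht => hv t (hr.trans ht)) (fun t ht => hb t (hr.trans ht))
      (fun t ht => hc t (hr.trans ht)) (fun t ht => haK t (hr.trans ht))
      (fun t ht => hbK t (hr.trans ht)) (fun t ht => hcK t (hr.trans ht))
      (fun t ht => hdK t (hr.trans ht)) hur hvr
    exact ⟨r, hr, .inl fun t ht => (this t ht).1, .inl fun t ht => (this t ht).2⟩
  by_cases h2 : ∃ r, s ≤ r ∧ u r ≤ 0 ∧ v r ≤ 0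
  · obtain ⟨r, hr, hur, hvr⟩ := h2
    have := quadrant_invariant (u := fun t => -u t) (v := fun t => -v t) (s := r)
      (fun t ht => (hu t (hr.trans ht)).neg.congr_deriv (by ring))
      (fun t ht => (hv t (hr.trans ht)).neg.congr_deriv (by ring))
      (fun t ht => hb t (hr.trans ht))
      (fun t ht => hc t (hr.trans ht)) (fun t ht => haK t (hr.trans ht))
      (fun t ht => hbK t (hr.trans ht)) (fun t ht => hcK t (hr.trans ht))
      (fun t ht => hdK t (hr.trans ht)) (neg_nonneg.2 hur) (neg_nonneg.2 hvr)
    exact ⟨r, hr, .inr fun t ht => neg_nonneg.1 (this t ht).1,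
      .inr fun t ht => neg_nonneg.1 (this t ht).2⟩
  -- Where one coordinate vanishes, the sign of the other puts `(u, v)` in one of the two quadrants.
  push Not at h1 h2
  refine ⟨s, le_rfl, signed_of_ne_zero
    (fun t ht => (hu t ht).continuousAt.continuousWithinAt) fun t ht h => ?_, signed_of_ne_zero
    (fun t ht => (hv t ht).continuousAt.continuousWithinAt) fun t ht h => ?_⟩
  · have := h1 t ht h.ge
    have := h2 t ht h.le
    linarith
  · rcases le_total 0 (u t) with h' | h'
    · have := h1 t ht h'
      linarith
    · have := h2 t ht h'
      linarith

lemma tendsto_of_deriv_nonneg {w u : ℝ → ℝ} {r B : ℝ}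
    (hw : ∀ t, r ≤ t → HasDerivAt w (u t) t) (hu : ∀ t, r ≤ t → 0 ≤ u t)
    (hB : ∀ t, r ≤ t → w t ≤ B) : ∃ l, Tendsto w atTop (𝓝 l) := by
  have hmono : MonotoneOn w (Ici r) :=
    monotoneOn_of_hasDerivWithinAt_nonneg (convex_Ici r)
      (fun t ht => (hw t ht).continuousAt.continuousWithinAt)
      (fun t ht => (hw t (interior_subset ht)).hasDerivWithinAt)
      (fun t ht => hu t (interior_subset ht))
  have hm : Monotone fun t => w (max t r) := fun p q hpq =>
    hmono (le_max_right p r) (le_max_right q r) (max_le_max_right r hpq)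
  refine ⟨_, (tendsto_atTop_ciSup hm ⟨B, ?_⟩).congr' ?_⟩
  · rintro _ ⟨t, rfl⟩
    exact hB _ (le_max_right t r)
  · filter_upwards [eventually_ge_atTop r] with t ht
    rw [max_eq_left ht]

lemma tendsto_of_deriv_signed {w u : ℝ → ℝ} {r B : ℝ}
    (hw : ∀ t, r ≤ t → HasDerivAt w (u t) t)
    (hu : (∀ t, r ≤ t → 0 ≤ u t) ∨ (∀ t, r ≤ t → u t ≤ 0))
    (hB : ∀ t, r ≤ t → |w t| ≤ B) : ∃ l, Tendsto w atTop (𝓝 l) := by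
  rcases hu with hu | hu
  · exact tendsto_of_deriv_nonneg hw hu fun t ht => (abs_le.1 (hB t ht)).2
  · obtain ⟨l, hl⟩ := tendsto_of_deriv_nonneg (w := fun t => -w t) (u := fun t => -u t) (B := B)
      (fun t ht => (hw t ht).neg) (fun t ht => neg_nonneg.2 (hu t ht))
      (fun t ht => by have := (abs_le.1 (hB t ht)).1; linarith)
    exact ⟨-l, by simpa using hl.neg⟩

lemma deriv_limit_eq_zero {w u : ℝ → ℝ} {r l q : ℝ}
    (hw : ∀ t, r ≤ t → HasDerivAt w (u t) t)
    (hl : Tendsto w atTop (𝓝 l)) (hq : Tendsto u atTop (𝓝 q)) : q = 0 := by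
  -- By the mean value theorem `u (ξ t) = w (t + 1) - w t → 0` for some `ξ t ≥ t`.
  have hmv : ∀ t, ∃ z, t ≤ z ∧ (r ≤ t → u z = w (t + 1) - w t) := by
    intro t
    by_cases ht : r ≤ t
    · obtain ⟨z, hz, he⟩ := exists_hasDerivAt_eq_slope w u (lt_add_one t)
        (fun z hz => (hw z (ht.trans hz.1)).continuousAt.continuousWithinAt)
        (fun z hz => hw z (ht.trans hz.1.le))
      exact ⟨z, hz.1.le, fun _ => by simpa using he⟩
    · exact ⟨t, le_rfl, fun h => absurd h ht⟩
  choose ξ hξ hξe using hmv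
  have h1 : Tendsto (fun t => u (ξ t)) atTop (𝓝 q) :=
    hq.comp (tendsto_atTop_mono hξ tendsto_id)
  have h2 : Tendsto (fun t => w (t + 1) - w t) atTop (𝓝 0) := by
    simpa using (hl.comp (tendsto_atTop_add_const_right _ 1 tendsto_id)).sub hl
  refine tendsto_nhds_unique h1 (h2.congr' ?_)
  filter_upwards [eventually_ge_atTop r] with t ht
  exact (hξe t ht).symm

/-- Hirsch's planar convergence theorem for cooperative systems: if f : ℝ² → ℝ² is C¹
with nonnegative off-diagonal partial derivatives (∂f₀/∂x₁ ≥ 0 and ∂f₁/∂x₀ ≥ 0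
everywhere), then every bounded solution of x' = f(x) on [0, ∞) converges to an
equilibrium of f. -/
theorem cooperative_planar_bounded_solution_converges
    (f : (Fin 2 → ℝ) → (Fin 2 → ℝ)) (hf : ContDiff ℝ 1 f)
    (hcoop₁ : ∀ p : Fin 2 → ℝ, 0 ≤ fderiv ℝ f p (Pi.single 1 1) 0)
    (hcoop₂ : ∀ p : Fin 2 → ℝ, 0 ≤ fderiv ℝ f p (Pi.single 0 1) 1)
    (x : ℝ → (Fin 2 → ℝ))
    (hsol : ∀ t ∈ Set.Ici (0 : ℝ), HasDerivWithinAt x (f (x t)) (Set.Ici 0) t)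
    (hbdd : Bornology.IsBounded (x '' Set.Ici (0 : ℝ))) :
    ∃ p : Fin 2 → ℝ, Filter.Tendsto x Filter.atTop (nhds p) ∧ f p = 0 := by
  have hx : ∀ t, 1 ≤ t → HasDerivAt x (f (x t)) t := fun t ht =>
    (hsol t (mem_Ici.2 (by linarith))).hasDerivAt (Ici_mem_nhds (by linarith))
  have hy : ∀ t, 1 ≤ t → HasDerivAt (fun t => f (x t)) (fderiv ℝ f (x t) (f (x t))) t :=
    fun t ht => ((hf.differentiable one_ne_zero) (x t)).hasFDerivAt.comp_hasDerivAt t (hx t ht)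
  have hexp : ∀ (p v : Fin 2 → ℝ) (i : Fin 2), fderiv ℝ f p v i =
      fderiv ℝ f p (Pi.single 0 1) i * v 0 + fderiv ℝ f p (Pi.single 1 1) i * v 1 := by
    intro p v i
    have hv : v = v 0 • Pi.single 0 1 + v 1 • Pi.single 1 1 := by
      ext j; fin_cases j <;> simp
    conv_lhs => rw [hv]
    simp only [map_add, map_smul, Pi.add_apply, Pi.smul_apply, smul_eq_mul]
    ring
  obtain ⟨B, hB⟩ := hbdd.exists_norm_le
  have hxB : ∀ i t, 1 ≤ t → |x t i| ≤ B := fun i t ht =>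
    (norm_le_pi_norm (x t) i).trans (hB _ ⟨t, mem_Ici.2 (by linarith), rfl⟩)
  -- `Df` is continuous, hence bounded on the compact closure of the range of `x`.
  obtain ⟨K, hK⟩ := (hbdd.isCompact_closure.image
    (hf.continuous_fderiv one_ne_zero)).isBounded.exists_norm_le
  have hcoef : ∀ i j t, 1 ≤ t → fderiv ℝ f (x t) (Pi.single j 1) i ≤ K := by
    intro i j t ht
    have h1 : ‖fderiv ℝ f (x t)‖ ≤ K :=
      hK _ ⟨x t, subset_closure ⟨t, mem_Ici.2 (by linarith), rfl⟩, rfl⟩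
    have h2 := (fderiv ℝ f (x t)).le_opNorm (Pi.single j 1)
    have h3 : ‖(Pi.single j 1 : Fin 2 → ℝ)‖ = 1 := by simp [Pi.norm_single]
    rw [h3, mul_one] at h2
    exact (le_abs_self _).trans ((norm_le_pi_norm _ i).trans (h2.trans h1))
  obtain ⟨r, hr, h0, h1⟩ := eventually_signed (s := 1) (K := K)
    (u := fun t => f (x t) 0) (v := fun t => f (x t) 1)
    (a := fun t => fderiv ℝ f (x t) (Pi.single 0 1) 0)
    (b := fun t => fderiv ℝ f (x t) (Pi.single 1 1) 0)
    (c := fun t => fderiv ℝ f (x t) (Pi.single 0 1) 1)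
    (d := fun t => fderiv ℝ f (x t) (Pi.single 1 1) 1)
    (fun t ht => (hasDerivAt_pi.1 (hy t ht) 0).congr_deriv (hexp _ _ _))
    (fun t ht => (hasDerivAt_pi.1 (hy t ht) 1).congr_deriv (hexp _ _ _))
    (fun t _ => hcoop₁ _) (fun t _ => hcoop₂ _)
    (hcoef 0 0) (hcoef 0 1) (hcoef 1 0) (hcoef 1 1)
  have hxi : ∀ i t, r ≤ t → HasDerivAt (fun t => x t i) (f (x t) i) t := fun i t ht =>
    hasDerivAt_pi.1 (hx t (hr.trans ht)) i
  have hlim : ∀ i, ∃ l, Tendsto (fun t => x t i) atTop (𝓝 l) := by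
    intro i
    refine tendsto_of_deriv_signed (hxi i) ?_ fun t ht => hxB i t (hr.trans ht)
    fin_cases i
    · exact h0
    · exact h1
  choose p hp using hlim
  have hxp : Tendsto x atTop (𝓝 p) := tendsto_pi_nhds.2 hp
  refine ⟨p, hxp, funext fun i => deriv_limit_eq_zero (hxi i) (hp i) ?_⟩
  exact tendsto_pi_nhds.1 ((hf.continuous.tendsto p).comp hxp) i
end

section
/- Consider the vector field f(x, y) = (−0.3570x − 0.2637y + 6.9566y² − 16.4522y³ + 11.0347y⁴, −0.2243y + 1.2710x + 6.9038x² + 13.6668x³ − 8.6907x⁴) on ℝ². Then f(0, 0) = 0, and there exist two distinct points a = (a₁, a₂) and b = (b₁, b₂) with a₁ > 0, a₂ > 0, b₁ > 0, b₂ > 0, a ≠ b, f(a) = 0 and f(b) = 0. Hence the system has at least three fixed points in the closed first quadrant [0, ∞)²: the origin and two points with strictly positive coordinates. -/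
/-!
The second component of `f` is linear in `y`, so it vanishes exactly on the graph of
`g x = (1.2710 x + 6.9038 x² + 13.6668 x³ - 8.6907 x⁴) / 0.2243`. Substituting `y = g x` in
the first component leaves a polynomial in `x` that changes sign on `[1/1000, 1/50]` and
on `[2, 2003/1000]`; the intermediate value theorem gives a zero in each interval, and `g` is
positive on `(0, 2003/1000]`, so both zeros yield fixed points with positive coordinates.
-/

/-- The solution `y = g x` of the second fixed-point equation. -/
noncomputable def nullcline (x : ℝ) : ℝ :=
  (1.2710 * x + 6.9038 * x ^ 2 + 13.6668 * x ^ 3 - 8.6907 * x ^ 4) / 0.2243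

/-- The first component of the vector field along the curve `y = nullcline x`. -/
noncomputable def reduced (x : ℝ) : ℝ :=
  -0.3570 * x - 0.2637 * nullcline x + 6.9566 * nullcline x ^ 2
    - 16.4522 * nullcline x ^ 3 + 11.0347 * nullcline x ^ 4

lemma continuous_reduced : Continuous reduced := by
  unfold reduced nullcline
  fun_prop

lemma nullcline_pos {x : ℝ} (h0 : 0 < x) (h1 : x ≤ 2003 / 1000) : 0 < nullcline x := by
  -- The numerator is `x * q x`; bounding one factor of `x ^ 3` by `2003 / 1000` makes `q`
  -- a quadratic that is positive up to `2003 / 1000`.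
  have hq : 0 < 1.2710 + 6.9038 * x + 13.6668 * x ^ 2 - 8.6907 * x ^ 3 := by
    have h2 : 0 ≤ x ^ 2 * (2003 / 1000 - x) := mul_nonneg (sq_nonneg x) (by linarith)
    have h3 : 0 ≤ x * (2003 / 1000 - x) := mul_nonneg h0.le (by linarith)
    norm_num at *
    linarith
  have hx := mul_pos h0 hq
  unfold nullcline
  apply div_pos _ (by norm_num)
  linarith

theorem wiki2D_three_fixed_points :
    let f : ℝ × ℝ → ℝ × ℝ := fun p =>
      (-0.3570 * p.1 - 0.2637 * p.2 + 6.9566 * p.2 ^ 2 - 16.4522 * p.2 ^ 3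
          + 11.0347 * p.2 ^ 4,
       -0.2243 * p.2 + 1.2710 * p.1 + 6.9038 * p.1 ^ 2 + 13.6668 * p.1 ^ 3
          - 8.6907 * p.1 ^ 4)
    f (0, 0) = 0 ∧
      ∃ a b : ℝ × ℝ, 0 < a.1 ∧ 0 < a.2 ∧ 0 < b.1 ∧ 0 < b.2 ∧ a ≠ b ∧
        f a = 0 ∧ f b = 0 := by
  intro f
  have key : ∀ x, reduced x = 0 → f (x, nullcline x) = 0 := by
    intro x hx
    refine Prod.ext hx ?_
    simp only [f, nullcline, Prod.snd_zero]
    ring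
  obtain ⟨x, ⟨hx0, hx1⟩, hx⟩ : (0 : ℝ) ∈ reduced '' Set.Icc (1 / 1000) (1 / 50) :=
    intermediate_value_Icc (by norm_num) continuous_reduced.continuousOn
      ⟨by norm_num [reduced, nullcline], by norm_num [reduced, nullcline]⟩
  obtain ⟨z, ⟨hz0, hz1⟩, hz⟩ : (0 : ℝ) ∈ reduced '' Set.Icc 2 (2003 / 1000) :=
    intermediate_value_Icc' (by norm_num) continuous_reduced.continuousOn
      ⟨by norm_num [reduced, nullcline], by norm_num [reduced, nullcline]⟩
  have hxp : 0 < x := by linarith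
  have hzp : 0 < z := by linarith
  refine ⟨by simp [f], (x, nullcline x), (z, nullcline z), hxp,
    nullcline_pos hxp (by linarith), hzp, nullcline_pos hzp hz1, ?_, key x hx, key z hz⟩
  intro h
  have hxz : x = z := congrArg Prod.fst h
  linarith
end

section
/- Consider the vector field f(x, y) = (−0.2677x + V₁(y), −0.4655y + V₂(x)) on ℝ², where V₁(y) = 2.3520y − 8.3986y² + 11.2901y³ − 5.1815y⁴ and V₂(x) = 1.1757x − 1.7697x² + 0.7948x³ + 0.0172x⁴. Then there exists a point (x₀, y₀) with 0.5 < x₀ < 0.7 and 0.4 < y₀ < 0.6 such that f(x₀, y₀) = 0; i.e. the normalized two-dimensional Wikipedia model has a fixed point in the interior of the unit square near (0.6, 0.5). -/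
/-!
The first equation is solved for `x` by `x = V₁(y) / 0.2677`. Substituting this in the second one
leaves a single polynomial equation in `y`, whose left-hand side is positive at `y = 0.52` and
negative at `y = 0.53`, so the intermediate value theorem gives a root `y` in between. On that
interval `V₁(y) / 0.2677` stays inside `(0.5, 0.7)`.
-/

/-- The normalized two-dimensional Wikipedia model has a fixed point in the interior
of the unit square, near (0.6, 0.5). -/
theorem wiki2D_normalized_interior_fixed_point :
    ∃ x₀ y₀ : ℝ, 0.5 < x₀ ∧ x₀ < 0.7 ∧ 0.4 < y₀ ∧ y₀ < 0.6 ∧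
      -0.2677 * x₀ + (2.3520 * y₀ - 8.3986 * y₀ ^ 2 + 11.2901 * y₀ ^ 3
          - 5.1815 * y₀ ^ 4) = 0 ∧
      -0.4655 * y₀ + (1.1757 * x₀ - 1.7697 * x₀ ^ 2 + 0.7948 * x₀ ^ 3
          + 0.0172 * x₀ ^ 4) = 0 := by
  let X : ℝ → ℝ := fun y =>
    (2.3520 * y - 8.3986 * y ^ 2 + 11.2901 * y ^ 3 - 5.1815 * y ^ 4) / 0.2677
  let G : ℝ → ℝ := fun y =>
    -0.4655 * y + (1.1757 * X y - 1.7697 * X y ^ 2 + 0.7948 * X y ^ 3 + 0.0172 * X y ^ 4)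
  have hG : Continuous G := by fun_prop
  have h_mem : (0 : ℝ) ∈ Set.Icc (G 0.53) (G 0.52) := by
    constructor <;> norm_num [G, X]
  obtain ⟨y, ⟨h₁, h₂⟩, hy⟩ :=
    intermediate_value_Icc' (by norm_num : (0.52 : ℝ) ≤ 0.53) hG.continuousOn h_mem
  -- Expanding `V₁` around the left endpoint makes its higher-order terms small.
  obtain ⟨t, rfl⟩ : ∃ t, y = 0.52 + t := ⟨y - 0.52, by ring⟩
  have ht₀ : 0 ≤ t := by linarith
  have ht₁ : t ≤ 0.01 := by linarith
  have ht₂ : t ^ 2 ≤ 0.01 ^ 2 := by gcongr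
  have ht₃ : t ^ 3 ≤ 0.01 ^ 3 := by gcongr
  have ht₄ : t ^ 4 ≤ 0.01 ^ 4 := by gcongr
  have hp₂ : 0 ≤ t ^ 2 := by positivity
  have hp₃ : 0 ≤ t ^ 3 := by positivity
  have hp₄ : 0 ≤ t ^ 4 := by positivity
  refine ⟨X (0.52 + t), 0.52 + t, ?_, ?_, by linarith, by linarith, ?_, hy⟩
  · rw [lt_div_iff₀ (by norm_num)]
    linarith
  · rw [div_lt_iff₀ (by norm_num)]
    linarith
  · simp only [X]
    ring
end
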